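/- Sub-coeffecting of the coeffect-instrumented operational semantics: suppose γ' ≤co γ (pointwise). Then (1) if γ·ρ ⊢ V ⇓ W then γ'·ρ ⊢ V ⇓ W; (2) if γ·ρ ⊢ M ⇓ T then γ'·ρ ⊢ M ⇓ T. -/

import Mathlib

set_option autoImplicit false

/-- A preordered semiring of grades `(Q, +, 0, ·, 1, ≤co)`,
where `≤co` is a preorder respected by `+` and `·`. -/
structure CoSig (Q : Type) where
  add : Q → Q → Q
  zero : Q
  mul : Q → Q → Q
  one : Q
  le : Q → Q → Prop
  add_assoc : ∀ a b c, add (add a b) c = add a (add b c)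
  add_comm : ∀ a b, add a b = add b a
  add_zero : ∀ a, add a zero = a
  mul_assoc : ∀ a b c, mul (mul a b) c = mul a (mul b c)
  one_mul : ∀ a, mul one a = a
  mul_one : ∀ a, mul a one = a
  zero_mul : ∀ a, mul zero a = zero
  mul_zero : ∀ a, mul a zero = zero
  left_distrib : ∀ a b c, mul a (add b c) = add (mul a b) (mul a c)
  right_distrib : ∀ a b c, mul (add a b) c = add (mul a c) (mul b c)
  le_refl : ∀ a, le a a
  le_trans : ∀ a b c, le a b → le b c → le a c
  add_le_add : ∀ a b c d, le a b → le c d → le (add a c) (add b d)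
  mul_le_mul : ∀ a b c d, le a b → le c d → le (mul a c) (mul b d)

namespace CBPVCo

/-- Pointwise comparison of grade vectors: `γ₁ ≤co γ₂`. -/
def vle {Q : Type} (S : CoSig Q) (γ₁ γ₂ : List Q) : Prop := List.Forall₂ S.le γ₁ γ₂

/-- Pointwise addition of grade vectors. -/
def vadd {Q : Type} (S : CoSig Q) (γ₁ γ₂ : List Q) : List Q := List.zipWith S.add γ₁ γ₂

/-- Pointwise scaling of a grade vector: `q·γ`. -/
def vscale {Q : Type} (S : CoSig Q) (q : Q) (γ : List Q) : List Q := γ.map (S.mul q)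

/-- `γ ≤co 0̄`: every entry of the grade vector is discardable. -/
def leZero {Q : Type} (S : CoSig Q) (γ : List Q) : Prop := ∀ q ∈ γ, S.le q S.zero

mutual
/-- CBPV value types (coeffect version): `unit`, thunks `U B`, positive products. -/
inductive VTy (Q : Type) : Type where
  | unit : VTy Q
  | thunk : CTy Q → VTy Q
  | prod : VTy Q → VTy Q → VTy Q
/-- CBPV computation types (coeffect version): graded functions `A^q → B`,
graded returners `F_q A`, negative products. -/
inductive CTy (Q : Type) : Type where
  | arr : VTy Q → Q → CTy Q → CTy Q
  | F : Q → VTy Q → CTy Q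
  | wth : CTy Q → CTy Q → CTy Q
end

mutual
/-- CBPV values (de Bruijn indices for variables). -/
inductive Val (Q : Type) : Type where
  | var : Nat → Val Q
  | unit : Val Q
  | thunk : Comp Q → Val Q
  | pair : Val Q → Val Q → Val Q
/-- CBPV computations, with grade annotations on binders and on `return`. -/
inductive Comp (Q : Type) : Type where
  | lam : Q → Comp Q → Comp Q
  | app : Comp Q → Val Q → Comp Q
  | force : Val Q → Comp Q
  | split : Q → Val Q → Comp Q → Comp Q
  | cpair : Comp Q → Comp Q → Comp Q
  | fst : Comp Q → Comp Q
  | snd : Comp Q → Comp Q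
  | ret : Q → Val Q → Comp Q
  | letin : Q → Comp Q → Comp Q → Comp Q
end

/-- Closed values: closures (capturing a grade vector and an environment),
unit, and pairs of closed values. -/
inductive CloVal (Q : Type) : Type where
  | clo : List Q → List (CloVal Q) → Comp Q → CloVal Q
  | unit : CloVal Q
  | pair : CloVal Q → CloVal Q → CloVal Q

/-- Closed terminal computations. -/
inductive Terminal (Q : Type) : Type where
  | ret : Q → CloVal Q → Terminal Q
  | lamClo : List Q → List (CloVal Q) → Q → Comp Q → Terminal Q
  | cpairClo : List Q → List (CloVal Q) → Comp Q → Comp Q → Terminal Q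

/-- The coeffect-instrumented value judgment `γ·ρ ⊢ V ⇓ W`. -/
inductive EvalVal {Q : Type} (S : CoSig Q) :
    List Q → List (CloVal Q) → Val Q → CloVal Q → Prop where
  | var : ∀ {γ : List Q} {ρ : List (CloVal Q)} {x : Nat} {q : Q} {W : CloVal Q},
      γ.length = ρ.length → ρ[x]? = some W → γ[x]? = some q → S.le q S.one →
      (∀ (i : Nat) (q' : Q), i ≠ x → γ[i]? = some q' → S.le q' S.zero) →
      EvalVal S γ ρ (.var x) W
  | unit : ∀ {γ : List Q} {ρ : List (CloVal Q)},
      γ.length = ρ.length → leZero S γ → EvalVal S γ ρ .unit .unit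
  | thunk : ∀ {γ γ' : List Q} {ρ : List (CloVal Q)} {M : Comp Q},
      vle S γ γ' → EvalVal S γ ρ (.thunk M) (.clo γ' ρ M)
  | pair : ∀ {γ γ₁ γ₂ : List Q} {ρ : List (CloVal Q)} {V₁ V₂ : Val Q} {W₁ W₂ : CloVal Q},
      EvalVal S γ₁ ρ V₁ W₁ → EvalVal S γ₂ ρ V₂ W₂ → vle S γ (vadd S γ₁ γ₂) →
      EvalVal S γ ρ (.pair V₁ V₂) (.pair W₁ W₂)

/-- The coeffect-instrumented big-step judgment `γ·ρ ⊢ M ⇓ T`. -/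
inductive EvalComp {Q : Type} (S : CoSig Q) :
    List Q → List (CloVal Q) → Comp Q → Terminal Q → Prop where
  | lam : ∀ {γ γ' : List Q} {ρ : List (CloVal Q)} {q : Q} {M : Comp Q},
      vle S γ γ' → EvalComp S γ ρ (.lam q M) (.lamClo γ' ρ q M)
  | cpair : ∀ {γ γ' : List Q} {ρ : List (CloVal Q)} {M₁ M₂ : Comp Q},
      vle S γ γ' → EvalComp S γ ρ (.cpair M₁ M₂) (.cpairClo γ' ρ M₁ M₂)
  | ret : ∀ {γ γ₁ : List Q} {ρ : List (CloVal Q)} {q : Q} {V : Val Q} {W : CloVal Q},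
      EvalVal S γ₁ ρ V W → vle S γ (vscale S q γ₁) →
      EvalComp S γ ρ (.ret q V) (.ret q W)
  | app : ∀ {γ γ₁ γ₂ γ' : List Q} {ρ ρ' : List (CloVal Q)} {M M' : Comp Q}
      {V : Val Q} {W : CloVal Q} {q : Q} {T : Terminal Q},
      EvalComp S γ₁ ρ M (.lamClo γ' ρ' q M') → EvalVal S γ₂ ρ V W →
      EvalComp S (q :: γ') (W :: ρ') M' T → vle S γ (vadd S γ₁ (vscale S q γ₂)) →
      EvalComp S γ ρ (.app M V) T
  | force : ∀ {γ γ' : List Q} {ρ ρ' : List (CloVal Q)} {V : Val Q} {M : Comp Q} {T : Terminal Q},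
      EvalVal S γ ρ V (.clo γ' ρ' M) → EvalComp S γ' ρ' M T → EvalComp S γ ρ (.force V) T
  | letin : ∀ {γ γ₁ γ₂ : List Q} {ρ : List (CloVal Q)} {q₁ q₂ : Q} {M N : Comp Q}
      {W : CloVal Q} {T : Terminal Q},
      EvalComp S γ₁ ρ M (.ret q₁ W) → EvalComp S (S.mul q₁ q₂ :: γ₂) (W :: ρ) N T →
      vle S γ (vadd S (vscale S q₂ γ₁) γ₂) → EvalComp S γ ρ (.letin q₂ M N) T
  | split : ∀ {γ γ₁ γ₂ : List Q} {ρ : List (CloVal Q)} {q : Q} {V : Val Q}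
      {W₁ W₂ : CloVal Q} {N : Comp Q} {T : Terminal Q},
      EvalVal S γ₁ ρ V (.pair W₁ W₂) → EvalComp S (q :: q :: γ₂) (W₂ :: W₁ :: ρ) N T →
      vle S γ (vadd S (vscale S q γ₁) γ₂) → EvalComp S γ ρ (.split q V N) T
  | fst : ∀ {γ γ' : List Q} {ρ ρ' : List (CloVal Q)} {M M₁ M₂ : Comp Q} {T : Terminal Q},
      EvalComp S γ ρ M (.cpairClo γ' ρ' M₁ M₂) → EvalComp S γ' ρ' M₁ T →
      EvalComp S γ ρ (.fst M) T
  | snd : ∀ {γ γ' : List Q} {ρ ρ' : List (CloVal Q)} {M M₁ M₂ : Comp Q} {T : Terminal Q},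
      EvalComp S γ ρ M (.cpairClo γ' ρ' M₁ M₂) → EvalComp S γ' ρ' M₂ T →
      EvalComp S γ ρ (.snd M) T

/-! The rules use the grade vector `γ` of their conclusion in only two ways. Most of them just bound
it above, and transitivity of `≤co` absorbs a smaller `γ'` into that bound. The rules for `force`
and the two projections instead pass `γ` unchanged to the premise evaluating the eliminated term, so
there the weakening is pushed into that premise.
-/

section Forall₂

variable {α β : Type*}

theorem forall₂_trans {R : α → α → Prop} [IsTrans α R] {l₁ l₂ l₃ : List α} :
    List.Forall₂ R l₁ l₂ → List.Forall₂ R l₂ l₃ → List.Forall₂ R l₁ l₃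
  | .nil, .nil => .nil
  | .cons hab h₁₂, .cons hbc h₂₃ => .cons (_root_.trans hab hbc) (forall₂_trans h₁₂ h₂₃)

theorem exists_getElem?_eq_some_of_forall₂ {R : α → β → Prop} {l₁ : List α} {l₂ : List β}
    (h : List.Forall₂ R l₁ l₂) {i : ℕ} {a : α} (ha : l₁[i]? = some a) :
    ∃ b, l₂[i]? = some b ∧ R a b := by
  obtain ⟨hi₁, rfl⟩ := List.getElem?_eq_some_iff.mp ha
  have hi₂ : i < l₂.length := h.length_eq ▸ hi₁
  exact ⟨l₂[i], List.getElem?_eq_getElem hi₂, h.get hi₁ hi₂⟩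

end Forall₂

section SubCoeffecting

variable {Q : Type} {S : CoSig Q} {γ γ' : List Q} {ρ : List (CloVal Q)}

instance isTrans_le : IsTrans Q S.le := ⟨S.le_trans⟩

theorem vle.trans {γ₁ γ₂ γ₃ : List Q} (h₁₂ : vle S γ₁ γ₂) (h₂₃ : vle S γ₂ γ₃) : vle S γ₁ γ₃ :=
  forall₂_trans h₁₂ h₂₃

theorem vle.exists_ge_getElem? (hle : vle S γ' γ) {i : ℕ} {q' : Q} (hq' : γ'[i]? = some q') :
    ∃ q, γ[i]? = some q ∧ S.le q' q :=
  exists_getElem?_eq_some_of_forall₂ hle hq'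

theorem vle.exists_le_getElem? (hle : vle S γ' γ) {i : ℕ} {q : Q} (hq : γ[i]? = some q) :
    ∃ q', γ'[i]? = some q' ∧ S.le q' q :=
  exists_getElem?_eq_some_of_forall₂ (List.Forall₂.flip (R := flip S.le) hle) hq

theorem leZero.anti (hle : vle S γ' γ) (hγ : leZero S γ) : leZero S γ' := by
  intro q' hq'
  obtain ⟨i, hi⟩ := List.mem_iff_getElem?.mp hq'
  obtain ⟨q, hq, hq'q⟩ := hle.exists_ge_getElem? hi
  exact S.le_trans _ _ _ hq'q (hγ q (List.mem_of_getElem? hq))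

theorem EvalVal.anti {V : Val Q} {W : CloVal Q} (hle : vle S γ' γ) (hV : EvalVal S γ ρ V W) :
    EvalVal S γ' ρ V W := by
  have hlength : γ'.length = γ.length := hle.length_eq
  cases hV with
  | var hγρ hW hq hq_one hzero =>
    obtain ⟨q', hq', hq'q⟩ := hle.exists_le_getElem? hq
    refine .var (hlength.trans hγρ) hW hq' (S.le_trans _ _ _ hq'q hq_one) ?_
    intro i r' hi hr'
    obtain ⟨r, hr, hr'r⟩ := hle.exists_ge_getElem? hr'
    exact S.le_trans _ _ _ hr'r (hzero i r hi hr)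
  | unit hγρ hγ => exact .unit (hlength.trans hγρ) (hγ.anti hle)
  | thunk hγ => exact .thunk (hle.trans hγ)
  | pair hV₁ hV₂ hγ => exact .pair hV₁ hV₂ (hle.trans hγ)

theorem EvalComp.anti {M : Comp Q} {T : Terminal Q} (hle : vle S γ' γ)
    (hM : EvalComp S γ ρ M T) : EvalComp S γ' ρ M T := by
  induction hM generalizing γ' with
  | lam hγ => exact .lam (hle.trans hγ)
  | cpair hγ => exact .cpair (hle.trans hγ)
  | ret hV hγ => exact .ret hV (hle.trans hγ)
  | app hM hV hBody hγ => exact .app hM hV hBody (hle.trans hγ)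
  | force hV hM => exact .force (hV.anti hle) hM
  | letin hM hN hγ => exact .letin hM hN (hle.trans hγ)
  | split hV hN hγ => exact .split hV hN (hle.trans hγ)
  | fst _ hM₁ ihM => exact .fst (ihM hle) hM₁
  | snd _ hM₂ ihM => exact .snd (ihM hle) hM₂

end SubCoeffecting

/-- Sub-coeffecting of the coeffect-instrumented operational semantics:
if `γ' ≤co γ` (pointwise), then any evaluation under `γ` is also an
evaluation under `γ'`, with the same result. -/
theorem semantic_sub_coeffecting {Q : Type} (S : CoSig Q) {γ γ' : List Q} (hle : vle S γ' γ) :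
    (∀ {ρ : List (CloVal Q)} {V : Val Q} {W : CloVal Q},
      EvalVal S γ ρ V W → EvalVal S γ' ρ V W) ∧
    (∀ {ρ : List (CloVal Q)} {M : Comp Q} {T : Terminal Q},
      EvalComp S γ ρ M T → EvalComp S γ' ρ M T) := by
  exact ⟨EvalVal.anti hle, EvalComp.anti hle⟩

end CBPVCo
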